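/- arXiv:1110.4658 — 2 statements merged into one kernel-verified Lean document; each statement's English description precedes it below -/
import Mathlib

section
/- Let f₁, a₁, a₂, a₃, h ∈ ℝ and define the cubic polynomial F(y) = f₁ + a₁y + a₂y² + a₃y³. If a₃ < 0 or F(h) = 0, then for every T > 0 there exists a continuous function y : [0,T] → ℝ with y(t) = h + ∫_t^T F(y(s)) ds for all t ∈ [0,T]. -/
open MeasureTheory Set

/-!
Reversing time turns the backward equation into the initial value problem `z' = F z`, `z 0 = h`.
If `a ≤ h ≤ b` with `F b ≤ 0 ≤ F a`, then the flow cannot leave `[a, b]`; hence replacing `F` by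
its constant extension from `[a, b]`, which is bounded and globally Lipschitz and thus has global
solutions, does not change the solution. For a polynomial of odd degree with negative leading
coefficient such `a` and `b` exist because `F → ∓∞` at `±∞`, and for a zero `h` of `F` one takes
`a = b = h`.
-/

open Filter Topology Polynomial
open scoped NNReal

section Barrier

variable {f f' : ℝ → ℝ} {a b c : ℝ}

theorem image_le_const_of_deriv_right_nonpos (hf : ContinuousOn f (Icc a b))
    (hf' : ∀ x ∈ Ico a b, HasDerivWithinAt f (f' x) (Ici x) x) (ha : f a ≤ c)
    (hc : ∀ x ∈ Ico a b, c ≤ f x → f' x ≤ 0) : ∀ x ∈ Icc a b, f x ≤ c := by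
  intro x hx
  -- Tilting the barrier by a slope `ε > 0` makes the derivative comparison strict.
  have le_line : ∀ ε > 0, f x ≤ c + ε * (x - a) := fun ε hε =>
    image_le_of_deriv_right_lt_deriv_boundary (B := fun s => c + ε * (s - a)) (B' := fun _ => ε)
      hf hf' (by simpa using ha)
      (fun s => by simpa using (((hasDerivAt_id s).sub_const a).const_mul ε).const_add c)
      (fun s hs hfs => (hc s hs (by
        rw [hfs]
        exact le_add_of_nonneg_right (mul_nonneg hε.le (sub_nonneg.2 hs.1)))).trans_lt hε) hx
  have tendsto_line : Tendsto (fun ε => c + ε * (x - a)) (𝓝[>] 0) (𝓝 c) := by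
    have : Continuous fun ε : ℝ => c + ε * (x - a) := by fun_prop
    simpa using (this.tendsto 0).mono_left nhdsWithin_le_nhds
  exact ge_of_tendsto tendsto_line (eventually_mem_nhdsWithin.mono le_line)

theorem const_le_image_of_deriv_right_nonneg (hf : ContinuousOn f (Icc a b))
    (hf' : ∀ x ∈ Ico a b, HasDerivWithinAt f (f' x) (Ici x) x) (ha : c ≤ f a)
    (hc : ∀ x ∈ Ico a b, f x ≤ c → 0 ≤ f' x) : ∀ x ∈ Icc a b, c ≤ f x := fun x hx =>
  neg_le_neg_iff.1 <| image_le_const_of_deriv_right_nonpos hf.neg (fun s hs => (hf' s hs).neg)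
    (neg_le_neg ha) (fun s hs hcs => neg_nonpos.2 (hc s hs (neg_le_neg_iff.1 hcs))) x hx

end Barrier

section InitialValueProblem

theorem exists_hasDerivWithinAt_Icc_of_lipschitzWith_of_bounded
    {E : Type*} [NormedAddCommGroup E] [NormedSpace ℝ E] [CompleteSpace E]
    {G : E → E} {K L : ℝ≥0} (hG : LipschitzWith K G) (hL : ∀ x, ‖G x‖ ≤ L)
    (x₀ : E) {T : ℝ} (hT : 0 ≤ T) :
    ∃ z : ℝ → E, z 0 = x₀ ∧ ∀ t ∈ Icc 0 T, HasDerivWithinAt z (G (z t)) (Icc 0 T) t := by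
  have picard : IsPicardLindelof (fun _ => G) (tmin := 0) (tmax := T) ⟨0, le_rfl, hT⟩ x₀
      (L * T.toNNReal) 0 L K :=
    .of_time_independent (fun x _ => hL x) hG.lipschitzOnWith (by simp [hT])
  exact picard.exists_eq_forall_mem_Icc_hasDerivWithinAt₀

variable {K : ℝ≥0} {a b : ℝ}

theorem lipschitzWith_IccExtend_domRestrict {α : Type*} [PseudoEMetricSpace α] {F : ℝ → α}
    (hF : LipschitzOnWith K F (Icc a b)) (hab : a ≤ b) :
    LipschitzWith K (IccExtend hab ((Icc a b).domRestrict F)) := by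
  simpa only [mul_one, IccExtend] using hF.to_restrict.comp (LipschitzWith.projIcc hab)

theorem exists_forall_norm_IccExtend_domRestrict_le {E : Type*} [SeminormedAddCommGroup E]
    {F : ℝ → E} (hF : ContinuousOn F (Icc a b)) (hab : a ≤ b) :
    ∃ L : ℝ≥0, ∀ x, ‖IccExtend hab ((Icc a b).domRestrict F) x‖ ≤ L := by
  obtain ⟨C, hC⟩ := isCompact_Icc.exists_bound_of_continuousOn hF
  exact ⟨C.toNNReal, fun x =>
    (hC _ (projIcc a b hab x).2).trans (Real.le_coe_toNNReal C)⟩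

theorem exists_hasDerivWithinAt_Icc_of_inward {F : ℝ → ℝ} (hF : LipschitzOnWith K F (Icc a b))
    (ha : 0 ≤ F a) (hb : F b ≤ 0) {h : ℝ} (hh : h ∈ Icc a b) {T : ℝ} (hT : 0 ≤ T) :
    ∃ z : ℝ → ℝ, z 0 = h ∧ MapsTo z (Icc 0 T) (Icc a b) ∧
      ∀ t ∈ Icc 0 T, HasDerivWithinAt z (F (z t)) (Icc 0 T) t := by
  have hab : a ≤ b := hh.1.trans hh.2
  let G := IccExtend hab ((Icc a b).domRestrict F)
  obtain ⟨L, hL⟩ := exists_forall_norm_IccExtend_domRestrict_le hF.continuousOn hab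
  obtain ⟨z, hz₀, hz⟩ := exists_hasDerivWithinAt_Icc_of_lipschitzWith_of_bounded
    (lipschitzWith_IccExtend_domRestrict hF hab) hL h hT
  have hz_cont : ContinuousOn z (Icc 0 T) := HasDerivWithinAt.continuousOn hz
  have hz_right : ∀ t ∈ Ico 0 T, HasDerivWithinAt z (G (z t)) (Ici t) t := fun t ht =>
    (hz t (Ico_subset_Icc_self ht)).mono_of_mem_nhdsWithin (Icc_mem_nhdsGE_of_mem ht)
  have hz_le : ∀ t ∈ Icc 0 T, z t ≤ b :=
    image_le_const_of_deriv_right_nonpos hz_cont hz_right (hz₀ ▸ hh.2) fun t _ hbt => by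
      simpa [G, IccExtend_of_right_le hab _ hbt] using hb
  have hz_ge : ∀ t ∈ Icc 0 T, a ≤ z t :=
    const_le_image_of_deriv_right_nonneg hz_cont hz_right (hz₀ ▸ hh.1) fun t _ hta => by
      simpa [G, IccExtend_of_le_left hab _ hta] using ha
  have hz_maps : MapsTo z (Icc 0 T) (Icc a b) := fun t ht => ⟨hz_ge t ht, hz_le t ht⟩
  refine ⟨z, hz₀, hz_maps, fun t ht => ?_⟩
  simpa [IccExtend_of_mem hab _ (hz_maps ht)] using hz t ht

end InitialValueProblem

section BackwardEquation

variable {E : Type*} [NormedAddCommGroup E] [NormedSpace ℝ E]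

/-- `y` solves the backward equation on `[0, T]` with time-independent generator `F` and terminal
value `h`. Values of `y` outside `[0, T]` are irrelevant. -/
def IsBackwardSolution (F : E → E) (h : E) (T : ℝ) (y : ℝ → E) : Prop :=
  ContinuousOn y (Icc 0 T) ∧ ∀ t ∈ Icc 0 T, y t = h + ∫ s in t..T, F (y s)

theorem isBackwardSolution_comp_sub_left [CompleteSpace E] {F : E → E} {T : ℝ} {z : ℝ → E}
    (hz : ∀ t ∈ Icc 0 T, HasDerivWithinAt z (F (z t)) (Icc 0 T) t)
    (hFz : ContinuousOn (fun t => F (z t)) (Icc 0 T)) :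
    IsBackwardSolution F (z 0) T fun t => z (T - t) := by
  have hz_cont : ContinuousOn z (Icc 0 T) := HasDerivWithinAt.continuousOn hz
  refine ⟨hz_cont.comp (by fun_prop) fun t ht => ⟨sub_nonneg.2 ht.2, sub_le_self T ht.1⟩,
    fun t ht => ?_⟩
  have hT_sub : 0 ≤ T - t := sub_nonneg.2 ht.2
  have hsub : Icc 0 (T - t) ⊆ Icc 0 T := Icc_subset_Icc_right (sub_le_self T ht.1)
  have integral_eq : ∫ s in (0 : ℝ)..T - t, F (z s) = z (T - t) - z 0 :=
    intervalIntegral.integral_eq_sub_of_hasDerivAt_of_le hT_sub (hz_cont.mono hsub)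
      (fun s hs => ((hz s (hsub (Ioo_subset_Icc_self hs))).mono hsub).hasDerivAt
        (Icc_mem_nhds hs.1 hs.2))
      ((hFz.mono hsub).intervalIntegrable_of_Icc hT_sub)
  calc z (T - t) = z 0 + ∫ s in (0 : ℝ)..T - t, F (z s) := by rw [integral_eq, add_sub_cancel]
    _ = z 0 + ∫ s in t..T, F (z (T - s)) := by
      rw [intervalIntegral.integral_comp_sub_left (fun s => F (z s)), sub_self]

theorem exists_isBackwardSolution_of_inward {F : ℝ → ℝ} {K : ℝ≥0} {a b h T : ℝ}
    (hF : LipschitzOnWith K F (Icc a b)) (ha : 0 ≤ F a) (hb : F b ≤ 0) (hh : h ∈ Icc a b)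
    (hT : 0 ≤ T) : ∃ y : ℝ → ℝ, IsBackwardSolution F h T y := by
  obtain ⟨z, rfl, hz_maps, hz⟩ := exists_hasDerivWithinAt_Icc_of_inward hF ha hb hh hT
  exact ⟨_, isBackwardSolution_comp_sub_left hz
    (hF.continuousOn.comp (HasDerivWithinAt.continuousOn hz) hz_maps)⟩

end BackwardEquation

section PolynomialGenerator

variable {P : ℝ[X]}

theorem exists_lipschitzOnWith_eval (P : ℝ[X]) {s : Set ℝ} (hs : IsCompact s) :
    ∃ K : ℝ≥0, LipschitzOnWith K (fun x => P.eval x) s :=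
  (P.contDiff_aeval 1).locallyLipschitz.locallyLipschitzOn.exists_lipschitzOnWith_of_compact hs

theorem tendsto_eval_atBot_atTop_of_odd_natDegree (hodd : Odd P.natDegree)
    (hlead : P.leadingCoeff ≤ 0) : Tendsto (fun x => P.eval x) atBot atTop := by
  have hdeg : 0 < (P.comp (-X)).degree := by
    rw [degree_comp_neg_X]
    exact natDegree_pos_iff_degree_pos.1 hodd.pos
  have hnonneg : 0 ≤ (P.comp (-X)).leadingCoeff := by
    simpa [hodd.neg_one_pow] using hlead
  have := (tendsto_atTop_of_leadingCoeff_nonneg _ hdeg hnonneg).comp tendsto_neg_atBot_atTop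
  simpa [Function.comp_def] using this

theorem exists_inward_Icc_of_odd_natDegree (hodd : Odd P.natDegree) (hlead : P.leadingCoeff ≤ 0)
    (h : ℝ) : ∃ a b, h ∈ Icc a b ∧ 0 ≤ P.eval a ∧ P.eval b ≤ 0 := by
  have htop : Tendsto (fun x => P.eval x) atTop atBot :=
    tendsto_atBot_of_leadingCoeff_nonpos P (natDegree_pos_iff_degree_pos.1 hodd.pos) hlead
  obtain ⟨a, hah, ha⟩ := ((eventually_le_atBot h).and
    ((tendsto_eval_atBot_atTop_of_odd_natDegree hodd hlead).eventually_ge_atTop 0)).exists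
  obtain ⟨b, hhb, hb⟩ := ((eventually_ge_atTop h).and (htop.eventually_le_atBot 0)).exists
  exact ⟨a, b, ⟨hah, hhb⟩, ha, hb⟩

theorem stmt2_general (P : ℝ[X]) (h : ℝ)
    (hcond : (Odd P.natDegree ∧ P.leadingCoeff < 0) ∨ P.eval h = 0) {T : ℝ} (hT : 0 ≤ T) :
    ∃ y : ℝ → ℝ, IsBackwardSolution (fun x => P.eval x) h T y := by
  obtain ⟨a, b, hh, ha, hb⟩ : ∃ a b, h ∈ Icc a b ∧ 0 ≤ P.eval a ∧ P.eval b ≤ 0 := by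
    rcases hcond with ⟨hodd, hlead⟩ | hroot
    · exact exists_inward_Icc_of_odd_natDegree hodd hlead.le h
    · exact ⟨h, h, ⟨le_rfl, le_rfl⟩, hroot.ge, hroot.le⟩
  obtain ⟨K, hK⟩ := exists_lipschitzOnWith_eval P (isCompact_Icc (a := a) (b := b))
  exact exists_isBackwardSolution_of_inward hK ha hb hh hT

end PolynomialGenerator

/-- Sufficient condition for global solvability of the backward ODE with cubic
generator (Theorem 5.4 (i)). -/
theorem stmt2
    (f1 a1 a2 a3 h : ℝ) (F : ℝ → ℝ)
    (hF : ∀ y : ℝ, F y = f1 + a1 * y + a2 * y ^ 2 + a3 * y ^ 3)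
    (hcond : a3 < 0 ∨ F h = 0) :
    ∀ T : ℝ, 0 < T → ∃ y : ℝ → ℝ, ContinuousOn y (Icc 0 T) ∧
      ∀ t ∈ Icc (0:ℝ) T, y t = h + ∫ s in t..T, F (y s) := by
  intro T hT
  let P : ℝ[X] := Cubic.toPoly ⟨a3, a2, a1, f1⟩
  obtain rfl : F = fun x => P.eval x := funext fun x => by
    simp only [hF, P, Cubic.toPoly, eval_add, eval_mul, eval_C, eval_pow, eval_X]
    ring
  refine stmt2_general P h (hcond.imp_left fun ha3 => ⟨?_, ?_⟩) hT.le
  · rw [Cubic.natDegree_of_a_ne_zero' ha3.ne]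
    decide
  · rwa [Cubic.leadingCoeff_of_a_ne_zero' ha3.ne]
end

section
/- Let T > 0 and let F̲, F̄ : [0,T] × ℝ → ℝ satisfy F̲ ≤ F̄ pointwise, with t ↦ F̄(t,y) and t ↦ F̲(t,y) Lebesgue measurable for each y, and assume that for every M > 0 there exist constants L_M, K_M such that for all t ∈ [0,T] both F̄(t,·) and F̲(t,·) are L_M-Lipschitz on [−M, M] and bounded in absolute value by K_M on [−M, M]. Let h̲ ≤ h̄ be real numbers. Suppose there exist ε > 0 and C > 0 such that F̄(t,y) ≤ −εy³ + C(y² + 1) for all t and all y ≥ 0, and F̲(t,y) ≥ −εy³ − C(y² + 1) for all t and all y ≤ 0. Then there exist constants λ₁ ≤ min(h̲, 0) and λ₂ ≥ max(h̄, 0) such that the two dominating backward ODEs ȳ(t) = h̄ + ∫_t^T F̄(s, ȳ(s)) ds and y̲(t) = h̲ + ∫_t^T F̲(s, y̲(s)) ds admit continuous solutions ȳ, y̲ on [0,T] with λ₁ ≤ y̲(t) ≤ λ₂ and λ₁ ≤ ȳ(t) ≤ λ₂ for all t ∈ [0,T]. -/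
open MeasureTheory Set

/-!
At a height `M` beyond the terminal values where the cubic term dominates, both generators are
nonpositive at `M` and nonnegative at `-M`. Replacing the generator by its value at the projection
of the state onto `[-M, M]` makes it globally Lipschitz, so Picard iteration solves the backward
equation. Where the solution lies above `M`, the modified generator equals the nonpositive value at
`M`, so going backward in time from a terminal value below `M` the solution cannot exceed `M`;
symmetrically for `-M`. Hence the solution stays in `[-M, M]`, where the modification changed
nothing.
-/

section Measurability

open Filter

variable {α X Y : Type*} [MeasurableSpace α] {μ : Measure α} [TopologicalSpace Y]
  [TopologicalSpace.PseudoMetrizableSpace Y] {F : α → X → Y}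

theorem aestronglyMeasurable_apply_simpleFunc (hF : ∀ x, AEStronglyMeasurable (F · x) μ)
    (v : SimpleFunc α X) : AEStronglyMeasurable (fun t => F t (v t)) μ := by
  have hcover : ⋃ x : v.range, v ⁻¹' {(x : X)} = univ :=
    eq_univ_of_forall fun t => mem_iUnion.2 ⟨⟨v t, v.mem_range_self t⟩, rfl⟩
  rw [← μ.restrict_univ, ← hcover, aestronglyMeasurable_iUnion_iff]
  intro x
  refine (hF x).restrict.congr ((ae_restrict_iff' (v.measurableSet_fiber x)).2 (.of_forall ?_))
  intro t ht
  simp only [show v t = x from ht]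

theorem aestronglyMeasurable_apply_of_ae_continuous [TopologicalSpace X] {v : α → X}
    (hF : ∀ x, AEStronglyMeasurable (F · x) μ) (hcont : ∀ᵐ t ∂μ, Continuous (F t))
    (hv : StronglyMeasurable v) : AEStronglyMeasurable (fun t => F t (v t)) μ :=
  aestronglyMeasurable_of_tendsto_ae atTop
    (fun n => aestronglyMeasurable_apply_simpleFunc hF (hv.approx n))
    (hcont.mono fun t ht => (ht.tendsto (v t)).comp (hv.tendsto_approx t))

end Measurability

theorem intervalIntegrable_of_forall_norm_le {E : Type*} [NormedAddCommGroup E] {f : ℝ → E}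
    {a b K : ℝ} (hab : a ≤ b) (hf : AEStronglyMeasurable f)
    (hK : ∀ t ∈ Icc a b, ‖f t‖ ≤ K) : IntervalIntegrable f volume a b := by
  rw [intervalIntegrable_iff_integrableOn_Icc_of_le hab]
  exact Measure.integrableOn_of_bounded (by simp) hf
    (ae_restrict_of_forall_mem measurableSet_Icc hK)

theorem continuousOn_integral_left_of_intervalIntegrable {E : Type*} [NormedAddCommGroup E]
    [NormedSpace ℝ E] {f : ℝ → E} {a b : ℝ} (hab : a ≤ b) (hf : IntervalIntegrable f volume a b) :
    ContinuousOn (fun t => ∫ s in t..b, f s) (Icc a b) := by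
  rw [intervalIntegrable_iff_integrableOn_Icc_of_le hab] at hf
  rw [← uIcc_of_le hab] at hf ⊢
  exact intervalIntegral.continuousOn_primitive_interval_left hf

/-- A continuous solution `y` on `[a, b]` of the backward integral equation with generator `F` and
terminal value `h` at time `b`. -/
structure IsBackwardSolution_s6 {E : Type*} [NormedAddCommGroup E] [NormedSpace ℝ E]
    (F : ℝ → E → E) (h : E) (a b : ℝ) (y : ℝ → E) : Prop where
  continuousOn : ContinuousOn y (Icc a b)
  eq_add_integral : ∀ t ∈ Icc a b, y t = h + ∫ s in t..b, F s (y s)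

/-- A generator on `[a, b]` that is integrable in time and Lipschitz in the state, with a Lipschitz
constant `L` independent of time: the setting in which the backward equation is solved by Picard
iteration. No continuity in time is required. -/
structure IsLipschitzGenerator {E : Type*} [NormedAddCommGroup E] (F : ℝ → E → E) (L : NNReal)
    (a b : ℝ) : Prop where
  intervalIntegrable : ∀ x, IntervalIntegrable (F · x) volume a b
  lipschitzWith : ∀ t ∈ Icc a b, LipschitzWith L (F t)

namespace IsLipschitzGenerator

open scoped Nat NNReal

variable {E : Type*} [NormedAddCommGroup E] {F : ℝ → E → E} {L : ℝ≥0} {a b : ℝ}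

theorem intervalIntegrable_apply (hF : IsLipschitzGenerator F L a b) (hab : a ≤ b) {v : ℝ → E}
    (hv : Continuous v) : IntervalIntegrable (fun t => F t (v t)) volume a b := by
  have hlip : ∀ᵐ t ∂volume.restrict (uIoc a b), LipschitzWith L (F t) := by
    refine ae_restrict_of_forall_mem measurableSet_uIoc fun t ht => hF.lipschitzWith t ?_
    exact Ioc_subset_Icc_self (by rwa [uIoc_of_le hab] at ht)
  have hmeas : AEStronglyMeasurable (fun t => F t (v t)) (volume.restrict (uIoc a b)) :=
    aestronglyMeasurable_apply_of_ae_continuous (fun x => (hF.intervalIntegrable x).def'.1)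
      (hlip.mono fun _ h => h.continuous) hv.stronglyMeasurable
  have hbound : IntervalIntegrable (fun t => ‖F t 0‖ + L * ‖v t‖) volume a b :=
    (hF.intervalIntegrable 0).norm.add
      ((continuous_const.mul hv.norm).intervalIntegrable a b)
  refine hbound.mono_fun' hmeas (hlip.mono fun t ht => ?_)
  calc ‖F t (v t)‖ ≤ ‖F t 0‖ + ‖F t (v t) - F t 0‖ := norm_le_norm_add_norm_sub' _ _
    _ ≤ ‖F t 0‖ + L * ‖v t‖ := by simpa using ht.norm_sub_le (v t) 0

variable [NormedSpace ℝ E]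

/-- The Picard operator `u ↦ (t ↦ h + ∫ s in t..b, F s (u s))` of the backward equation. Elements
of `C(Icc a b, E)` are extended to `ℝ` by constants in order to be integrated. -/
noncomputable def picard (hF : IsLipschitzGenerator F L a b) (hab : a ≤ b) (h : E)
    (u : C(Icc a b, E)) : C(Icc a b, E) where
  toFun t := h + ∫ s in (t : ℝ)..b, F s (IccExtend hab u s)
  continuous_toFun := continuous_const.add
    (continuousOn_integral_left_of_intervalIntegrable hab
      (hF.intervalIntegrable_apply hab u.continuous.Icc_extend')).domRestrict

theorem picard_apply (hF : IsLipschitzGenerator F L a b) (hab : a ≤ b) (h : E)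
    (u : C(Icc a b, E)) (t : Icc a b) :
    hF.picard hab h u t = h + ∫ s in (t : ℝ)..b, F s (IccExtend hab u s) :=
  rfl

theorem dist_picard_apply_le (hF : IsLipschitzGenerator F L a b) (hab : a ≤ b) (h : E)
    {u v : C(Icc a b, E)} {g : ℝ → ℝ} (hg : Continuous g)
    (huv : ∀ s : Icc a b, dist (u s) (v s) ≤ g s) (t : Icc a b) :
    dist (hF.picard hab h u t) (hF.picard hab h v t) ≤ ∫ s in (t : ℝ)..b, L * g s := by
  have hint (w : C(Icc a b, E)) :
      IntervalIntegrable (fun s => F s (IccExtend hab w s)) volume t b :=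
    (hF.intervalIntegrable_apply hab w.continuous.Icc_extend').mono_set
      (uIcc_subset_uIcc_right (by rw [uIcc_of_le hab]; exact t.2))
  rw [picard_apply, picard_apply, dist_add_left, dist_eq_norm,
    ← intervalIntegral.integral_sub (hint u) (hint v)]
  refine intervalIntegral.norm_integral_le_of_norm_le t.2.2 (.of_forall fun s hs => ?_)
    ((continuous_const.mul hg).intervalIntegrable _ _)
  have hs' : s ∈ Icc a b := ⟨t.2.1.trans hs.1.le, hs.2⟩
  rw [← dist_eq_norm, IccExtend_of_mem hab u hs', IccExtend_of_mem hab v hs']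
  exact ((hF.lipschitzWith s hs').dist_le_mul _ _).trans (by gcongr; exact huv ⟨s, hs'⟩)

theorem dist_iterate_picard_apply_le (hF : IsLipschitzGenerator F L a b) (hab : a ≤ b) (h : E)
    (u v : C(Icc a b, E)) (n : ℕ) (t : Icc a b) :
    dist ((hF.picard hab h)^[n] u t) ((hF.picard hab h)^[n] v t) ≤
      (L * (b - t)) ^ n / n ! * dist u v := by
  induction n generalizing t with
  | zero => simpa using ContinuousMap.dist_apply_le_dist t
  | succ n ih =>
    rw [Function.iterate_succ_apply', Function.iterate_succ_apply']
    refine (hF.dist_picard_apply_le hab h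
      (g := fun s => (L * (b - s)) ^ n / n ! * dist u v) (by fun_prop) ih t).trans_eq ?_
    calc ∫ s in (t : ℝ)..b, L * ((L * (b - s)) ^ n / n ! * dist u v)
        = L ^ (n + 1) / n ! * dist u v * ∫ s in (t : ℝ)..b, (b - s) ^ n := by
          rw [← intervalIntegral.integral_const_mul]
          congr with s
          rw [mul_pow]
          ring
      _ = L ^ (n + 1) / n ! * dist u v * ((b - t) ^ (n + 1) / (n + 1)) := by
          simp [intervalIntegral.integral_comp_sub_left (fun x : ℝ => x ^ n)]
      _ = (L * (b - t)) ^ (n + 1) / (n + 1)! * dist u v := by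
          push_cast [Nat.factorial_succ, mul_pow]
          field_simp

theorem exists_contractingWith_iterate_picard (hF : IsLipschitzGenerator F L a b) (hab : a ≤ b)
    (h : E) : ∃ (n : ℕ) (K : ℝ≥0), ContractingWith K (hF.picard hab h)^[n] := by
  obtain ⟨n, hn⟩ := ((FloorSemiring.tendsto_pow_div_factorial_atTop
    (L * (b - a))).eventually_lt_const zero_lt_one).exists
  have hnonneg : 0 ≤ (L * (b - a)) ^ n / n ! :=
    div_nonneg (pow_nonneg (mul_nonneg L.2 (sub_nonneg.2 hab)) n) n !.cast_nonneg
  refine ⟨n, ⟨(L * (b - a)) ^ n / n !, hnonneg⟩, hn, .of_dist_le_mul fun u v => ?_⟩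
  refine (ContinuousMap.dist_le (mul_nonneg hnonneg dist_nonneg)).2 fun t => ?_
  have hbt : 0 ≤ b - t := sub_nonneg.2 t.2.2
  refine (hF.dist_iterate_picard_apply_le hab h u v n t).trans ?_
  change _ ≤ (L * (b - a)) ^ n / n ! * dist u v
  gcongr
  exact t.2.1

theorem exists_continuous_isBackwardSolution [CompleteSpace E] (hF : IsLipschitzGenerator F L a b)
    (hab : a ≤ b) (h : E) : ∃ y, Continuous y ∧ IsBackwardSolution_s6 F h a b y := by
  obtain ⟨n, K, hcontr⟩ := hF.exists_contractingWith_iterate_picard hab h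
  obtain ⟨u, hu⟩ : ∃ u, hF.picard hab h u = u := ⟨_, hcontr.isFixedPt_fixedPoint_iterate⟩
  refine ⟨IccExtend hab u, u.continuous.Icc_extend', u.continuous.Icc_extend'.continuousOn,
    fun t ht => ?_⟩
  rw [IccExtend_of_mem hab u ht, ← hF.picard_apply hab h u ⟨t, ht⟩, hu]

end IsLipschitzGenerator

namespace IsBackwardSolution_s6

section Vector

variable {E : Type*} [NormedAddCommGroup E] [NormedSpace ℝ E] {F G : ℝ → E → E} {h : E} {a b : ℝ}
  {y : ℝ → E}

theorem neg (hy : IsBackwardSolution_s6 F h a b y) :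
    IsBackwardSolution_s6 (fun t x => -F t (-x)) (-h) a b (-y) where
  continuousOn := hy.continuousOn.neg
  eq_add_integral t ht := by
    simp only [Pi.neg_apply, neg_neg, intervalIntegral.integral_neg, hy.eq_add_integral t ht,
      neg_add]

theorem congr (hy : IsBackwardSolution_s6 F h a b y) (hFG : ∀ t ∈ Icc a b, F t (y t) = G t (y t)) :
    IsBackwardSolution_s6 G h a b y where
  continuousOn := hy.continuousOn
  eq_add_integral t ht := by
    rw [hy.eq_add_integral t ht]
    congr 1
    refine intervalIntegral.integral_congr fun s hs => hFG s ?_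
    rw [uIcc_of_le ht.2] at hs
    exact ⟨ht.1.trans hs.1, hs.2⟩

theorem eq_add_integral_of_le (hy : IsBackwardSolution_s6 F h a b y)
    (hint : IntervalIntegrable (fun t => F t (y t)) volume a b) {r t : ℝ} (hat : a ≤ t)
    (htr : t ≤ r) (hrb : r ≤ b) : y t = y r + ∫ s in t..r, F s (y s) := by
  have ht : t ∈ uIcc a b := Icc_subset_uIcc ⟨hat, htr.trans hrb⟩
  have hr : r ∈ uIcc a b := Icc_subset_uIcc ⟨hat.trans htr, hrb⟩
  have hadd := intervalIntegral.integral_add_adjacent_intervals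
    (hint.mono_set (uIcc_subset_uIcc ht hr)) (hint.mono_set (uIcc_subset_uIcc hr right_mem_uIcc))
  rw [hy.eq_add_integral t ⟨hat, htr.trans hrb⟩, hy.eq_add_integral r ⟨hat.trans htr, hrb⟩, ← hadd]
  abel

end Vector

variable {F : ℝ → ℝ → ℝ} {h a b m M : ℝ} {y : ℝ → ℝ}

theorem le_of_forall_nonpos (hy : IsBackwardSolution_s6 F h a b y)
    (hint : IntervalIntegrable (fun t => F t (y t)) volume a b) (hM : h ≤ M)
    (hF : ∀ t ∈ Icc a b, ∀ x, M < x → F t x ≤ 0) : ∀ t ∈ Icc a b, y t ≤ M := by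
  intro t ht
  have hcompact : IsCompact (Icc t b ∩ y ⁻¹' Iic M) :=
    isCompact_Icc.of_isClosed_subset
      ((hy.continuousOn.mono (Icc_subset_Icc_left ht.1)).preimage_isClosed_of_isClosed
        isClosed_Icc isClosed_Iic) inter_subset_left
  have hyb : y b ≤ M := by
    simpa [hy.eq_add_integral b ⟨ht.1.trans ht.2, le_rfl⟩] using hM
  obtain ⟨r, ⟨⟨htr, hrb⟩, hyr⟩, hleast⟩ := hcompact.exists_isLeast ⟨b, ⟨ht.2, le_rfl⟩, hyb⟩
  have habove : ∀ s ∈ Ioo t r, M < y s := fun s hs =>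
    not_le.1 fun hle => hs.2.not_ge (hleast ⟨⟨hs.1.le, hs.2.le.trans hrb⟩, hle⟩)
  have hnonpos : ∫ s in t..r, F s (y s) ≤ 0 := by
    rw [intervalIntegral.integral_of_le htr, integral_Ioc_eq_integral_Ioo]
    exact setIntegral_nonpos measurableSet_Ioo fun s hs =>
      hF s ⟨ht.1.trans hs.1.le, hs.2.le.trans hrb⟩ _ (habove s hs)
  calc y t = y r + ∫ s in t..r, F s (y s) := hy.eq_add_integral_of_le hint ht.1 htr hrb
    _ ≤ M := add_le_of_le_of_nonpos hyr hnonpos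

theorem ge_of_forall_nonneg (hy : IsBackwardSolution_s6 F h a b y)
    (hint : IntervalIntegrable (fun t => F t (y t)) volume a b) (hm : m ≤ h)
    (hF : ∀ t ∈ Icc a b, ∀ x, x < m → 0 ≤ F t x) : ∀ t ∈ Icc a b, m ≤ y t := fun t ht =>
  neg_le_neg_iff.1 <| hy.neg.le_of_forall_nonpos
    (by simpa only [Pi.neg_apply, neg_neg] using! hint.neg) (neg_le_neg hm)
    (fun s hs x hx => neg_nonpos.2 (hF s hs (-x) (neg_lt.1 hx))) t ht

end IsBackwardSolution_s6

section Barriers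

variable {F : ℝ → ℝ → ℝ} {L : NNReal} {a b m M h : ℝ}

theorem isLipschitzGenerator_comp_projIcc (hmM : m ≤ M)
    (hint : ∀ y ∈ Icc m M, IntervalIntegrable (F · y) volume a b)
    (hlip : ∀ t ∈ Icc a b, LipschitzOnWith L (F t) (Icc m M)) :
    IsLipschitzGenerator (fun t y => F t (projIcc m M hmM y)) L a b where
  intervalIntegrable y := hint _ (projIcc m M hmM y).2
  lipschitzWith t ht := by
    simpa using! (hlip t ht).to_restrict.comp (LipschitzWith.projIcc hmM)

theorem exists_isBackwardSolution_mapsTo_Icc (hab : a ≤ b) (hh : h ∈ Icc m M)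
    (hint : ∀ y ∈ Icc m M, IntervalIntegrable (F · y) volume a b)
    (hlip : ∀ t ∈ Icc a b, LipschitzOnWith L (F t) (Icc m M))
    (hlower : ∀ t ∈ Icc a b, 0 ≤ F t m) (hupper : ∀ t ∈ Icc a b, F t M ≤ 0) :
    ∃ y, IsBackwardSolution_s6 F h a b y ∧ MapsTo y (Icc a b) (Icc m M) := by
  have hmM : m ≤ M := hh.1.trans hh.2
  have hgen := isLipschitzGenerator_comp_projIcc hmM hint hlip
  obtain ⟨y, hcont, hsol⟩ := hgen.exists_continuous_isBackwardSolution hab h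
  have hintegrable := hgen.intervalIntegrable_apply hab hcont
  have hle : ∀ t ∈ Icc a b, y t ≤ M :=
    hsol.le_of_forall_nonpos hintegrable hh.2 fun t ht x hx => by
      simpa only [projIcc_of_right_le hmM hx.le] using hupper t ht
  have hge : ∀ t ∈ Icc a b, m ≤ y t :=
    hsol.ge_of_forall_nonneg hintegrable hh.1 fun t ht x hx => by
      simpa only [projIcc_of_le_left hmM hx.le] using hlower t ht
  have hmaps : MapsTo y (Icc a b) (Icc m M) := fun t ht => ⟨hge t ht, hle t ht⟩
  exact ⟨y, hsol.congr fun t ht => by rw [projIcc_of_mem hmM (hmaps ht)], hmaps⟩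

end Barriers

theorem eventually_mul_sq_add_one_le_mul_cube {ε : ℝ} (hε : 0 < ε) (C : ℝ) :
    ∀ᶠ M in Filter.atTop, C * (M ^ 2 + 1) ≤ ε * M ^ 3 := by
  filter_upwards [Filter.eventually_ge_atTop 1, Filter.eventually_ge_atTop (2 * |C| / ε)]
    with M hM1 hMC
  rw [div_le_iff₀' hε] at hMC
  calc C * (M ^ 2 + 1) ≤ |C| * (M ^ 2 + M ^ 2) := by
        gcongr
        · exact le_abs_self C
        · exact one_le_pow₀ hM1
    _ = 2 * |C| * M ^ 2 := by ring
    _ ≤ ε * M * M ^ 2 := by gcongr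
    _ = ε * M ^ 3 := by ring

/-- Bounded solutions of the dominating ODEs under the strong coercivity
condition `σ₂b₃ ≤ −ε` (Theorem 5.5 (i)). -/
theorem stmt6
    (T : ℝ) (hT : 0 < T)
    (Fl Fu : ℝ → ℝ → ℝ)
    (hle : ∀ t ∈ Icc (0:ℝ) T, ∀ y : ℝ, Fl t y ≤ Fu t y)
    (hmeasu : ∀ y : ℝ, Measurable fun t => Fu t y)
    (hmeasl : ∀ y : ℝ, Measurable fun t => Fl t y)
    (hreg : ∀ M : ℝ, 0 < M → ∃ L K : ℝ,
      ∀ t ∈ Icc (0:ℝ) T,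
        LipschitzOnWith (Real.toNNReal L) (fun y => Fu t y) (Icc (-M) M) ∧
        LipschitzOnWith (Real.toNNReal L) (fun y => Fl t y) (Icc (-M) M) ∧
        ∀ y ∈ Icc (-M) M, |Fu t y| ≤ K ∧ |Fl t y| ≤ K)
    (hl hu : ℝ) (hlu : hl ≤ hu)
    (ε C : ℝ) (hε : 0 < ε) (hC : 0 < C)
    (hgrowu : ∀ t ∈ Icc (0:ℝ) T, ∀ y : ℝ, 0 ≤ y →
      Fu t y ≤ -ε * y ^ 3 + C * (y ^ 2 + 1))
    (hgrowl : ∀ t ∈ Icc (0:ℝ) T, ∀ y : ℝ, y ≤ 0 →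
      -ε * y ^ 3 - C * (y ^ 2 + 1) ≤ Fl t y) :
    ∃ lam1 lam2 : ℝ, lam1 ≤ min hl 0 ∧ max hu 0 ≤ lam2 ∧
      ∃ yu yl : ℝ → ℝ,
        ContinuousOn yu (Icc 0 T) ∧ ContinuousOn yl (Icc 0 T) ∧
        (∀ t ∈ Icc (0:ℝ) T, yu t = hu + ∫ s in t..T, Fu s (yu s)) ∧
        (∀ t ∈ Icc (0:ℝ) T, yl t = hl + ∫ s in t..T, Fl s (yl s)) ∧
        (∀ t ∈ Icc (0:ℝ) T, lam1 ≤ yl t ∧ yl t ≤ lam2) ∧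
        (∀ t ∈ Icc (0:ℝ) T, lam1 ≤ yu t ∧ yu t ≤ lam2) := by
  obtain ⟨M, hM0, hMu, hMl, hdom⟩ := ((Filter.eventually_gt_atTop 0).and <|
    (Filter.eventually_ge_atTop |hu|).and <| (Filter.eventually_ge_atTop |hl|).and <|
    eventually_mul_sq_add_one_le_mul_cube hε C).exists
  have hupper : ∀ t ∈ Icc 0 T, Fu t M ≤ 0 := fun t ht => by
    linarith [hgrowu t ht M hM0.le]
  have hlower : ∀ t ∈ Icc 0 T, 0 ≤ Fl t (-M) := fun t ht => by
    linarith [hgrowl t ht (-M) (neg_nonpos.2 hM0.le), Odd.neg_pow (n := 3) (by decide) M,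
      neg_sq M]
  obtain ⟨L, K, hLK⟩ := hreg M hM0
  have hintu : ∀ y ∈ Icc (-M) M, IntervalIntegrable (Fu · y) volume 0 T := fun y hy =>
    intervalIntegrable_of_forall_norm_le hT.le (hmeasu y).aestronglyMeasurable
      fun t ht => ((hLK t ht).2.2 y hy).1
  have hintl : ∀ y ∈ Icc (-M) M, IntervalIntegrable (Fl · y) volume 0 T := fun y hy =>
    intervalIntegrable_of_forall_norm_le hT.le (hmeasl y).aestronglyMeasurable
      fun t ht => ((hLK t ht).2.2 y hy).2
  obtain ⟨yu, hyu, hyu_mem⟩ := exists_isBackwardSolution_mapsTo_Icc hT.le (abs_le.1 hMu) hintu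
    (fun t ht => (hLK t ht).1) (fun t ht => (hlower t ht).trans (hle t ht _)) hupper
  obtain ⟨yl, hyl, hyl_mem⟩ := exists_isBackwardSolution_mapsTo_Icc hT.le (abs_le.1 hMl) hintl
    (fun t ht => (hLK t ht).2.1) hlower (fun t ht => (hle t ht _).trans (hupper t ht))
  exact ⟨-M, M, le_min (abs_le.1 hMl).1 (neg_nonpos.2 hM0.le), max_le (abs_le.1 hMu).2 hM0.le,
    yu, yl, hyu.continuousOn, hyl.continuousOn, hyu.eq_add_integral, hyl.eq_add_integral,
    fun _ ht => hyl_mem ht, fun _ ht => hyu_mem ht⟩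
end
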